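/- arXiv:2008.11912 — 8 statements merged into one kernel-verified Lean document; each statement's English description precedes it below -/
import Mathlib

section
/- Let C be a small category, I and J types, and X : I → C, Y : J → C families of objects. Then there is a bijection between morphisms ∐_{i : I} yoneda.obj (X i) ⟶ ∐_{j : J} yoneda.obj (Y j) in the category of Type-valued presheaves on C and the set ∏_{i : I} Σ_{j : J} Hom_C(X i, Y j); i.e. a map of coproducts of representables is precisely the choice, for each index i, of an index j together with a morphism X i ⟶ Y j. -/
open CategoryTheory CategoryTheory.Limits

universe u

/-- Morphisms between coproducts of representable presheaves: a map
`∐ᵢ yoneda (X i) ⟶ ∐ⱼ yoneda (Y j)` is exactly the choice, for each `i`, of an index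
`j` together with a morphism `X i ⟶ Y j`. -/
theorem hom_coproduct_yoneda_equiv {C : Type u} [SmallCategory C]
    {I J : Type u} (X : I → C) (Y : J → C) :
    Nonempty
      (((∐ fun i : I => yoneda.obj (X i)) ⟶ ∐ fun j : J => yoneda.obj (Y j)) ≃
        ∀ i : I, Σ j : J, (X i ⟶ Y j)) := by
  have e1 : ((∐ fun i : I => yoneda.obj (X i)) ⟶ ∐ fun j : J => yoneda.obj (Y j)) ≃
      ∀ i : I, (yoneda.obj (X i) ⟶ ∐ fun j : J => yoneda.obj (Y j)) :=
    { toFun := fun f i => Sigma.ι (fun i : I => yoneda.obj (X i)) i ≫ f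
      invFun := fun g => Sigma.desc g
      left_inv := fun f => by
        apply Sigma.hom_ext
        intro i
        simp
      right_inv := fun g => by
        funext i
        simp }
  have e2 : ∀ c : C, (∐ fun j : J => yoneda.obj (Y j)).obj (Opposite.op c) ≃
      Σ j : J, (c ⟶ Y j) := fun c =>
    (PreservesCoproduct.iso ((evaluation Cᵒᵖ (Type u)).obj (Opposite.op c))
      (fun j : J => yoneda.obj (Y j)) ≪≫
      Types.coproductIso (fun j : J => (c ⟶ Y j))).toEquiv
  exact ⟨e1.trans (Equiv.piCongrRight fun i => yonedaEquiv.trans (e2 (X i)))⟩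
end

section
/- The local left lifting property is stable under composition: let O be a frame, I a partial order, and U : I → O a monotone map. If f : K → L and g : L → M are monotone maps of partial orders such that both f and g have the local left lifting property against (I, U), then the composite g ∘ f : K → M has the local left lifting property against (I, U). -/
/-- A monotone map `f : K → L` has the *local left lifting property* against a
diagram `U : I → O` of elements of a frame `O` if for every `σ : K →o I` the meet
`⨅ k, U (σ k)` is covered by the meets `⨅ l, U (τ l)` over all lifts `τ : L →o I`
of `σ` along `f`. -/
def HasLocalLLP {O : Type*} [Order.Frame O] {I : Type*} [PartialOrder I] (U : I →o O)
    {K L : Type*} [PartialOrder K] [PartialOrder L] (f : K →o L) : Prop :=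
  ∀ σ : K →o I,
    (⨅ k : K, U (σ k)) ≤ ⨆ τ : {τ : L →o I // τ.comp f = σ}, ⨅ l : L, U (τ.1 l)

/-- The local left lifting property is stable under composition. -/
theorem hasLocalLLP_comp {O : Type*} [Order.Frame O] {I : Type*} [PartialOrder I]
    (U : I →o O) {K L M : Type*} [PartialOrder K] [PartialOrder L] [PartialOrder M]
    (f : K →o L) (g : L →o M)
    (hf : HasLocalLLP U f) (hg : HasLocalLLP U g) :
    HasLocalLLP U (g.comp f) := by
  intro σ
  refine (hf σ).trans (iSup_le ?_)
  rintro ⟨τ, rfl⟩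
  refine (hg τ).trans (iSup_le ?_)
  rintro ⟨ρ, rfl⟩
  exact le_iSup (fun τ' : {τ' : M →o I // τ'.comp (g.comp f) = (ρ.comp g).comp f} =>
    ⨅ m : M, U (τ'.1 m)) ⟨ρ, rfl⟩
end

section
/- The local left lifting property is stable under retracts: let O be a frame, I a partial order, and U : I → O a monotone map. Let f : K → L and f' : K' → L' be monotone maps of partial orders, and suppose f' is a retract of f in the arrow category; that is, there are monotone maps i : K' → K, r : K → K', j : L' → L, s : L → L' with f ∘ i = j ∘ f', f' ∘ r = s ∘ f, r ∘ i = id, and s ∘ j = id. If f has the local left lifting property against (I, U), then so does f'. -/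
/-- The local left lifting property is stable under retracts in the arrow category. -/
theorem hasLocalLLP_retract {O : Type*} [Order.Frame O] {I : Type*} [PartialOrder I]
    (U : I →o O) {K L K' L' : Type*} [PartialOrder K] [PartialOrder L]
    [PartialOrder K'] [PartialOrder L']
    (f : K →o L) (f' : K' →o L')
    (i : K' →o K) (r : K →o K') (j : L' →o L) (s : L →o L')
    (hsq₁ : f.comp i = j.comp f') (hsq₂ : f'.comp r = s.comp f)
    (hri : r.comp i = OrderHom.id) (hsj : s.comp j = OrderHom.id)
    (hf : HasLocalLLP U f) :
    HasLocalLLP U f' := by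
  intro σ
  refine (le_iInf fun k => iInf_le (fun k' => U (σ k')) (r k)).trans ?_
  refine (hf (σ.comp r)).trans ?_
  refine iSup_le fun τ => ?_
  have h : (τ.1.comp j).comp f' = σ := by
    ext x
    have h1 : f (i x) = j (f' x) := DFunLike.congr_fun hsq₁ x
    have h2 : r (i x) = x := DFunLike.congr_fun hri x
    have h3 : τ.1 (f (i x)) = σ (r (i x)) := DFunLike.congr_fun τ.2 (i x)
    rw [h1, h2] at h3
    exact h3
  exact le_iSup_of_le ⟨τ.1.comp j, h⟩ (le_iInf fun l => iInf_le (fun l => U (τ.1 l)) (j l))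
end

section
/- Let O be a frame, I a partial order, and U : I → O a monotone map. Let g : K → L and h : L → L' be monotone maps of partial orders. If the composite h ∘ g : K → L' has the local left lifting property against (I, U), then g : K → L has the local left lifting property against (I, U). -/
/-- If a composite `h ∘ g` has the local left lifting property against `(I, U)`,
then so does the first factor `g`. -/
theorem hasLocalLLP_of_comp {O : Type*} [Order.Frame O] {I : Type*} [PartialOrder I]
    (U : I →o O) {K L L' : Type*} [PartialOrder K] [PartialOrder L] [PartialOrder L']
    (g : K →o L) (h : L →o L')
    (hgh : HasLocalLLP U (h.comp g)) :
    HasLocalLLP U g := by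
  intro σ
  refine (hgh σ).trans (iSup_le fun τ => ?_)
  refine le_trans ?_ (le_iSup (fun τ : {τ : L →o I // τ.comp g = σ} => ⨅ l : L, U (τ.1 l))
    ⟨τ.1.comp h, τ.2⟩)
  exact le_iInf fun l => iInf_le (fun l' : L' => U (τ.1 l')) (h l)
end

section
/- Local lifting against cones reduces to a 0-coinitial subset: let O be a frame, I a partial order, and U : I → O a monotone map. Let K be a finite partial order and K₀ ⊆ K a 0-coinitial subset with the induced order. If the canonical coercion K₀ → WithBot K₀ has the local left lifting property against (I, U), then the canonical coercion K → WithBot K has the local left lifting property against (I, U). Equivalently, unfolding the definitions: if for every monotone σ₀ : K₀ → I one has ⨅_{k ∈ K₀} U (σ₀ k) ≤ ⨆_{i : ∀ k ∈ K₀, i ≤ σ₀ k} U i, then for every monotone σ : K → I one has ⨅_{k : K} U (σ k) ≤ ⨆_{i : ∀ k : K, i ≤ σ k} U i. -/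
/-- A subset `K₀` of a partial order `K` is *0-coinitial* if every element of `K` is
bounded below by an element of `K₀`. -/
def ZeroCoinitial {K : Type*} [PartialOrder K] (K₀ : Set K) : Prop :=
  ∀ k : K, ∃ k₀ ∈ K₀, k₀ ≤ k

/-- The canonical coercion of a partial order into its left cone `WithBot K`,
as a monotone map. -/
def coneCoe (K : Type*) [PartialOrder K] : K →o WithBot K :=
  ⟨WithBot.some, fun _ _ h => WithBot.coe_le_coe.mpr h⟩

/-- Local lifting against cones reduces to a 0-coinitial subset: if the inclusion of
a 0-coinitial subset `K₀` of a finite poset `K` into its left cone has the local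
left lifting property against `(I, U)`, then so does `K → WithBot K`. -/
theorem hasLocalLLP_cone_of_zeroCoinitial {O : Type*} [Order.Frame O]
    {I : Type*} [PartialOrder I] (U : I →o O)
    {K : Type*} [PartialOrder K] [Fintype K] (K₀ : Set K) (hK₀ : ZeroCoinitial K₀)
    (h₀ : HasLocalLLP U (coneCoe K₀)) :
    HasLocalLLP U (coneCoe K) := by
  intro σ
  have h1 : (⨅ k : K, U (σ k)) ≤ ⨅ k : K₀, U ((σ.comp ⟨Subtype.val, fun _ _ h => h⟩) k) :=
    le_iInf fun k => iInf_le (fun k : K => U (σ k)) k.1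
  refine (h1.trans (h₀ _)).trans (iSup_le ?_)
  rintro ⟨τ, hτ⟩
  have hb : ∀ k : K, τ ⊥ ≤ σ k := by
    intro k
    obtain ⟨k₀, hk₀, hle⟩ := hK₀ k
    have h2 : τ (WithBot.some (⟨k₀, hk₀⟩ : K₀)) = σ k₀ := DFunLike.congr_fun hτ ⟨k₀, hk₀⟩
    exact (τ.monotone bot_le).trans (h2.le.trans (σ.monotone hle))
  let τ' : WithBot K →o I :=
    { toFun := fun l => WithBot.recBotCoe (C := fun _ => I) (τ ⊥) (fun k => σ k) l
      monotone' := by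
        intro a b hab
        induction a using WithBot.recBotCoe with
        | bot =>
          induction b using WithBot.recBotCoe with
          | bot => exact le_rfl
          | coe b => exact hb b
        | coe a =>
          induction b using WithBot.recBotCoe with
          | bot => exact absurd hab (WithBot.not_coe_le_bot a)
          | coe b => exact σ.monotone (WithBot.coe_le_coe.mp hab) }
  have hτ' : τ'.comp (coneCoe K) = σ := by
    ext k
    rfl
  refine le_trans ?_ (le_iSup (fun τ : {τ : WithBot K →o I // τ.comp (coneCoe K) = σ} =>
    ⨅ l : WithBot K, U (τ.1 l)) ⟨τ', hτ'⟩)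
  refine (iInf_le _ ⊥).trans (le_iInf fun l => U.monotone ?_)
  have : τ' ⊥ ≤ τ' l := τ'.monotone bot_le
  exact this
end

section
/- Atlases via lifting properties (poset part): let O be a frame, I a partial order, and U : I → O a monotone map. The following are equivalent: (a) the coercions K → WithBot K have the local left lifting property against (I, U) for K the empty partial order and for K a two-element partial order with the discrete (trivial) order; (b) for every finite type K equipped with the discrete partial order, the coercion K → WithBot K has the local left lifting property against (I, U); (c) for every natural number n, the inclusion of the partial order of nonempty proper subsets of Fin (n+1) into the partial order of all nonempty subsets of Fin (n+1), both ordered by reverse inclusion (S ≤ T iff T ⊆ S), has the local left lifting property against (I, U). -/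
/-- A type-synonym equipping a type with the discrete (trivial) partial order. -/
def Discrete' (α : Type*) : Type _ := α

instance (α : Type*) : PartialOrder (Discrete' α) where
  le a b := a = b
  le_refl _ := rfl
  le_trans _ _ _ h h' := Eq.trans h h'
  le_antisymm _ _ h _ := h

/-- The poset of nonempty subsets of `Fin (n+1)`, ordered by *reverse* inclusion
(the poset of nondegenerate simplices of the `n`-simplex). -/
abbrev NonemptySubsets (n : ℕ) : Type :=
  ({S : Set (Fin (n + 1)) // S.Nonempty})ᵒᵈ

/-- The poset of nonempty proper subsets of `Fin (n+1)`, ordered by *reverse*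
inclusion (the poset of nondegenerate simplices of the boundary of the
`n`-simplex). -/
abbrev NonemptyProperSubsets (n : ℕ) : Type :=
  ({S : Set (Fin (n + 1)) // S.Nonempty ∧ S ≠ Set.univ})ᵒᵈ

/-- The inclusion of the poset of nonempty proper subsets of `Fin (n+1)` into the
poset of all nonempty subsets, both with the reverse-inclusion order. -/
noncomputable def boundaryInclusion (n : ℕ) : NonemptyProperSubsets n →o NonemptySubsets n :=
  ⟨fun S => OrderDual.toDual ⟨(OrderDual.ofDual S).1, (OrderDual.ofDual S).2.1⟩,
    fun _ _ h => h⟩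


theorem llp_iff {O : Type*} [Order.Frame O] {I : Type*} [PartialOrder I] (U : I →o O)
    {K L : Type*} [PartialOrder K] [PartialOrder L] (f : K →o L)
    (hf : ∀ a b, f a ≤ f b → a ≤ b) (b : L) (hb : ∀ l, b ≤ l) (hne : ∀ k, f k ≠ b)
    (hs : ∀ l, l = b ∨ ∃ k, f k = l) :
    HasLocalLLP U f ↔
      ∀ σ : K →o I, (⨅ k, U (σ k)) ≤ ⨆ (i : I) (_ : ∀ k, i ≤ σ k), U i := by
  classical
  refine forall_congr' fun σ => ⟨fun h => h.trans ?_, fun h => h.trans ?_⟩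
  · refine iSup_le fun τ => ?_
    refine (iInf_le _ b).trans (le_iSup₂_of_le (τ.1 b) (fun k => ?_) le_rfl)
    have e : τ.1 (f k) = σ k := DFunLike.congr_fun τ.2 k
    exact (τ.1.monotone (hb (f k))).trans e.le
  · refine iSup₂_le fun i hi => ?_
    have hinj : ∀ k k', f k = f k' → k = k' := fun k k' e =>
      le_antisymm (hf _ _ e.le) (hf _ _ e.ge)
    let g : L → I := fun l => if h : ∃ k, f k = l then σ h.choose else i
    have hgf : ∀ k, g (f k) = σ k := fun k => by
      have h : ∃ k', f k' = f k := ⟨k, rfl⟩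
      have : g (f k) = σ h.choose := dif_pos h
      rw [this, hinj _ _ h.choose_spec]
    have hgb : g b = i := dif_neg (fun ⟨k, hk⟩ => hne k hk)
    have hig : ∀ l, i ≤ g l := fun l => by
      rcases hs l with rfl | ⟨k, rfl⟩
      · exact hgb.ge
      · rw [hgf]; exact hi k
    have hg : Monotone g := fun l l' hl => by
      rcases hs l with rfl | ⟨k, rfl⟩
      · rw [hgb]; exact hig _
      · rcases hs l' with rfl | ⟨k', rfl⟩
        · exact absurd (le_antisymm hl (hb _)) (hne k)
        · rw [hgf, hgf]; exact σ.monotone (hf _ _ hl)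
    refine le_iSup_of_le (⟨⟨g, hg⟩, ?_⟩ : {τ : L →o I // τ.comp f = σ}) ?_
    · ext k; exact hgf k
    · exact le_iInf fun l => U.monotone (hig l)

theorem cone_iff {O : Type*} [Order.Frame O] {I : Type*} [PartialOrder I] (U : I →o O)
    (K : Type*) [PartialOrder K] :
    HasLocalLLP U (coneCoe K) ↔
      ∀ σ : K →o I, (⨅ k, U (σ k)) ≤ ⨆ (i : I) (_ : ∀ k, i ≤ σ k), U i := by
  refine llp_iff U _ (fun a b h => WithBot.coe_le_coe.mp h) ⊥ (fun _ => bot_le)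
    (fun k => WithBot.coe_ne_bot) (fun l => ?_)
  induction l with
  | bot => exact Or.inl rfl
  | coe a => exact Or.inr ⟨a, rfl⟩

theorem boundary_iff {O : Type*} [Order.Frame O] {I : Type*} [PartialOrder I] (U : I →o O)
    (n : ℕ) :
    HasLocalLLP U (boundaryInclusion n) ↔
      ∀ σ : NonemptyProperSubsets n →o I,
        (⨅ k, U (σ k)) ≤ ⨆ (i : I) (_ : ∀ k, i ≤ σ k), U i := by
  refine llp_iff U _ (fun a b h => h)
    (OrderDual.toDual ⟨Set.univ, Set.univ_nonempty⟩) (fun l => ?_) (fun k h => ?_) (fun l => ?_)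
  · exact Set.subset_univ (OrderDual.ofDual l).1
  · exact (OrderDual.ofDual k).2.2 (congrArg (fun x => (OrderDual.ofDual x).1) h)
  · by_cases h : (OrderDual.ofDual l).1 = Set.univ
    · exact Or.inl (Subtype.ext h)
    · exact Or.inr ⟨OrderDual.toDual ⟨(OrderDual.ofDual l).1, (OrderDual.ofDual l).2, h⟩, rfl⟩

theorem finset_cover {O : Type*} [Order.Frame O] {I : Type*} [PartialOrder I] (U : I →o O)
    (h0 : ⊤ ≤ ⨆ i, U i)
    (h2 : ∀ a b, U a ⊓ U b ≤ ⨆ (i : I) (_ : i ≤ a ∧ i ≤ b), U i)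
    {K : Type*} (σ : K → I) (s : Finset K) :
    (⨅ k ∈ s, U (σ k)) ≤ ⨆ (i : I) (_ : ∀ k ∈ s, i ≤ σ k), U i := by
  classical
  induction s using Finset.induction_on with
  | empty => simpa using h0
  | insert a s ha ih =>
    rw [Finset.iInf_insert]
    refine (inf_le_inf_left _ ih).trans ?_
    rw [inf_iSup₂_eq]
    refine iSup₂_le fun i hi => (h2 _ _).trans ?_
    refine iSup₂_le fun j hj => le_iSup₂_of_le j ?_ le_rfl
    intro k hk
    rcases Finset.mem_insert.mp hk with rfl | hk
    · exact hj.1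
    · exact hj.2.trans (hi k hk)

theorem finite_cover {O : Type*} [Order.Frame O] {I : Type*} [PartialOrder I] (U : I →o O)
    (h0 : ⊤ ≤ ⨆ i, U i)
    (h2 : ∀ a b, U a ⊓ U b ≤ ⨆ (i : I) (_ : i ≤ a ∧ i ≤ b), U i)
    {K : Type*} [Finite K] (σ : K → I) :
    (⨅ k, U (σ k)) ≤ ⨆ (i : I) (_ : ∀ k, i ≤ σ k), U i := by
  cases nonempty_fintype K
  simpa using finset_cover U h0 h2 σ Finset.univ

theorem cone_a_iff {O : Type*} [Order.Frame O] {I : Type*} [PartialOrder I] (U : I →o O) :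
    (HasLocalLLP U (coneCoe (Discrete' Empty)) ∧ HasLocalLLP U (coneCoe (Discrete' Bool))) ↔
      (⊤ ≤ ⨆ i, U i) ∧ ∀ a b, U a ⊓ U b ≤ ⨆ (i : I) (_ : i ≤ a ∧ i ≤ b), U i := by
  rw [cone_iff, cone_iff]
  have : IsEmpty (Discrete' Empty) := inferInstanceAs (IsEmpty Empty)
  have : Finite (Discrete' Bool) := inferInstanceAs (Finite Bool)
  constructor
  · rintro ⟨h0, h2⟩
    refine ⟨le_trans (le_iInf fun k => isEmptyElim k)
      ((h0 ⟨fun x => isEmptyElim x, fun x => isEmptyElim x⟩).trans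
        (iSup₂_le fun i _ => le_iSup (fun i => U i) i)), fun a b => ?_⟩
    have := h2 ⟨fun x : Bool => cond x a b, fun x y h => by cases (h : x = y); exact le_rfl⟩
    refine le_trans (le_iInf fun k => ?_) (this.trans ?_)
    · match k with
      | true => exact inf_le_left
      | false => exact inf_le_right
    · exact iSup₂_le fun i hi => le_iSup₂_of_le i ⟨hi true, hi false⟩ le_rfl
  · rintro ⟨h0, h2⟩
    have : Finite (Discrete' Empty) := inferInstanceAs (Finite Empty)
    exact ⟨fun σ => finite_cover U h0 h2 σ, fun σ => finite_cover U h0 h2 σ⟩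

theorem atlas_tfae {O : Type*} [Order.Frame O] {I : Type*} [PartialOrder I]
    (U : I →o O) :
    List.TFAE
      [HasLocalLLP U (coneCoe (Discrete' Empty)) ∧
          HasLocalLLP U (coneCoe (Discrete' Bool)),
        ∀ (K : Type) (_ : Finite K), HasLocalLLP U (coneCoe (Discrete' K)),
        ∀ n : ℕ, HasLocalLLP U (boundaryInclusion n)] := by
  classical
  tfae_have 1 → 2 := by
    intro h K hK
    rw [cone_a_iff] at h
    have : Finite (Discrete' K) := hK
    exact (cone_iff U _).2 fun σ => finite_cover U h.1 h.2 σ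
  tfae_have 2 → 1 := fun h => ⟨h _ inferInstance, h _ inferInstance⟩
  tfae_have 1 → 3 := by
    intro h n
    rw [cone_a_iff] at h
    have : Finite (NonemptyProperSubsets n) :=
      inferInstanceAs (Finite {S : Set (Fin (n + 1)) // S.Nonempty ∧ S ≠ Set.univ})
    exact (boundary_iff U n).2 fun σ => finite_cover U h.1 h.2 σ
  tfae_have 3 → 1 := by
    intro h
    rw [cone_a_iff]
    constructor
    · have : IsEmpty (NonemptyProperSubsets 0) := ⟨fun S => by
        obtain ⟨S, ⟨x, hx⟩, hS⟩ := S
        refine hS (Set.eq_univ_of_forall fun y => ?_)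
        have e : y = x := Subsingleton.elim (α := Fin 1) y x
        exact e ▸ hx⟩
      exact le_trans (le_iInf fun k => isEmptyElim k)
        (((boundary_iff U 0).1 (h 0) ⟨fun x => isEmptyElim x, fun x => isEmptyElim x⟩).trans
          (iSup₂_le fun i _ => le_iSup (fun i => U i) i))
    · intro a b
      have key : ∀ S T : Set (Fin 2), T ⊆ S → T.Nonempty → S ≠ Set.univ →
          ((0 : Fin 2) ∈ S ↔ (0 : Fin 2) ∈ T) := by
        intro S T hTS hT hS
        refine ⟨fun h0 => ?_, fun h0 => hTS h0⟩
        by_contra h0T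
        obtain ⟨x, hx⟩ := hT
        have h1 : (1 : Fin 2) ∈ S := by
          fin_cases x
          · exact absurd hx h0T
          · exact hTS hx
        refine hS (Set.eq_univ_of_forall fun y => ?_)
        fin_cases y
        · exact h0
        · exact h1
      have := (boundary_iff U 1).1 (h 1)
        ⟨fun S => if (0 : Fin 2) ∈ (OrderDual.ofDual S).1 then a else b, fun S T hST => by
          have e := key (OrderDual.ofDual S).1 (OrderDual.ofDual T).1 hST
            (OrderDual.ofDual T).2.1 (OrderDual.ofDual S).2.2
          simp only [e]
          exact le_rfl⟩
      refine le_trans (le_iInf fun S => ?_) (this.trans ?_)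
      · change U a ⊓ U b ≤ U (if (0 : Fin 2) ∈ (OrderDual.ofDual S).1 then a else b)
        split_ifs
        · exact inf_le_left
        · exact inf_le_right
      · refine iSup₂_le fun i hi => le_iSup₂_of_le i ⟨?_, ?_⟩ le_rfl
        · have := hi (OrderDual.toDual ⟨{(0 : Fin 2)}, ⟨0, rfl⟩, fun e => by
            have : (1 : Fin 2) ∈ ({0} : Set (Fin 2)) := e ▸ Set.mem_univ _
            simp at this⟩)
          exact this.trans (if_pos (Set.mem_singleton _)).le
        · have := hi (OrderDual.toDual ⟨{(1 : Fin 2)}, ⟨1, rfl⟩, fun e => by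
            have : (0 : Fin 2) ∈ ({1} : Set (Fin 2)) := e ▸ Set.mem_univ _
            simp at this⟩)
          exact this.trans (if_neg (by simp)).le
  tfae_finish
end

section
/- Let p : C ⥤ D be a functor between categories that is a Grothendieck fibration (Functor.IsFibered in Mathlib: every morphism of D into the image of an object of C admits a strongly cartesian lift). Then the induced functor on arrow categories p.mapArrow : Arrow C ⥤ Arrow D is also a Grothendieck fibration. -/
open CategoryTheory

theorem mapArrow_isHomLift_of {C : Type*} {D : Type*} [Category C] [Category D]
    (p : C ⥤ D) {R S : Arrow D} {a b : Arrow C} (F : R ⟶ S) (φ : a ⟶ b)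
    (hl : p.IsHomLift F.left φ.left) (hr : p.IsHomLift F.right φ.right)
    (hR : p.IsHomLift R.hom a.hom) (hS : p.IsHomLift S.hom b.hom) :
    p.mapArrow.IsHomLift F φ := by
  have e1 : p.mapArrow.obj a = R :=
    Arrow.ext (IsHomLift.domain_eq p R.hom a.hom) (IsHomLift.codomain_eq p R.hom a.hom)
      (IsHomLift.fac' p R.hom a.hom)
  have e2 : p.mapArrow.obj b = S :=
    Arrow.ext (IsHomLift.domain_eq p S.hom b.hom) (IsHomLift.codomain_eq p S.hom b.hom)
      (IsHomLift.fac' p S.hom b.hom)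
  subst e1 e2
  have : F = p.mapArrow.map φ :=
    Arrow.hom_ext _ _ (@IsHomLift.eq_of_isHomLift _ _ _ _ p a.left b.left F.left φ.left hl)
      (@IsHomLift.eq_of_isHomLift _ _ _ _ p a.right b.right F.right φ.right hr)
  subst this
  infer_instance

theorem isHomLift_left_right {C : Type*} {D : Type*} [Category C] [Category D]
    (p : C ⥤ D) {R S : Arrow D} {a b : Arrow C} (F : R ⟶ S) (φ : a ⟶ b)
    (h : p.mapArrow.IsHomLift F φ) :
    p.IsHomLift F.left φ.left ∧ p.IsHomLift F.right φ.right := by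
  obtain ⟨⟩ := h
  exact ⟨IsHomLift.map p φ.left, IsHomLift.map p φ.right⟩

/-- If `p : C ⥤ D` is a Grothendieck fibration, then the induced functor on arrow
categories `Arrow C ⥤ Arrow D` is also a Grothendieck fibration. -/
theorem mapArrow_isFibered {C : Type*} {D : Type*} [Category C] [Category D]
    (p : C ⥤ D) [p.IsFibered] : p.mapArrow.IsFibered := by
  apply Functor.IsFibered.of_exists_isStronglyCartesian
  intro a R F
  obtain ⟨x, φl, hl⟩ := Functor.IsPreFibered.exists_isCartesian' (p := p) (a := a.left) F.left
  obtain ⟨y, φr, hr⟩ := Functor.IsPreFibered.exists_isCartesian' (p := p) (a := a.right) F.right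
  have hlift : p.IsHomLift (F.left ≫ p.map a.hom) (φl ≫ a.hom) :=
    @IsHomLift.comp _ _ _ _ p _ _ _ _ _ _ F.left (p.map a.hom) φl a.hom hl.toIsHomLift
      (IsHomLift.map p a.hom)
  have sl : p.IsStronglyCartesian F.left φl :=
    @Functor.IsFibered.isStronglyCartesian_of_isCartesian _ _ _ _ p _ _ _ F.left _ _ φl hl
  have sr : p.IsStronglyCartesian F.right φr :=
    @Functor.IsFibered.isStronglyCartesian_of_isCartesian _ _ _ _ p _ _ _ F.right _ _ φr hr
  obtain ⟨u, ⟨hu, hu'⟩, -⟩ := @Functor.IsStronglyCartesian.universal_property _ _ _ _ p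
    _ _ _ _ F.right φr sr _ _ R.hom (F.left ≫ p.map a.hom) (Arrow.w F) (φl ≫ a.hom) hlift
  have hmain : p.mapArrow.IsHomLift F
      (Arrow.homMk φl φr hu'.symm : Arrow.mk u ⟶ a) :=
    mapArrow_isHomLift_of p _ _ hl.toIsHomLift hr.toIsHomLift hu (IsHomLift.map p a.hom)
  refine ⟨Arrow.mk u, Arrow.homMk φl φr hu'.symm, ⟨?_⟩⟩
  intro a' G φ' h'
  obtain ⟨h1, h2⟩ := isHomLift_left_right p _ _ h'
  obtain ⟨χl, ⟨hχl, hχl'⟩, ul⟩ := Functor.IsStronglyCartesian.universal_property p F.left φl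
    G.left (G ≫ F).left rfl φ'.left
  obtain ⟨χr, ⟨hχr, hχr'⟩, ur⟩ := Functor.IsStronglyCartesian.universal_property p F.right φr
    G.right (G ≫ F).right rfl φ'.right
  have hw : χl ≫ u = a'.hom ≫ χr := by
    have i1 : p.IsHomLift (G.left ≫ R.hom) (χl ≫ u) := inferInstance
    have i2 : p.IsHomLift (G.left ≫ R.hom) (a'.hom ≫ χr) := by
      have e : G.left ≫ R.hom = p.map a'.hom ≫ G.right := Arrow.w G
      rw [e]
      exact @IsHomLift.comp _ _ _ _ p _ _ _ _ _ _ (p.map a'.hom) G.right a'.hom χr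
        (IsHomLift.map p a'.hom) hχr
    apply Functor.IsStronglyCartesian.ext p F.right φr (G.left ≫ R.hom)
    rw [Category.assoc, Category.assoc, hu', hχr', ← Category.assoc, hχl']
    exact Arrow.w φ'
  refine ⟨Arrow.homMk χl χr hw, ⟨?_, ?_⟩, ?_⟩
  · exact mapArrow_isHomLift_of p _ _ hχl hχr (IsHomLift.map p a'.hom) hu
  · exact Arrow.hom_ext _ _ hχl' hχr'
  · rintro π ⟨hπ, hπ'⟩
    obtain ⟨k1, k2⟩ := isHomLift_left_right p _ _ hπ
    exact Arrow.hom_ext _ _ (ul _ ⟨k1, congrArg (fun t => t.left) hπ'⟩)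
      (ur _ ⟨k2, congrArg (fun t => t.right) hπ'⟩)
end

section
/- Let p : C ⥤ D be a functor between categories and let φ : A ⟶ B be a morphism in the arrow category Arrow C, with components φ.left : A.left ⟶ B.left and φ.right : A.right ⟶ B.right. If φ.left is strongly cartesian with respect to p (over p.map φ.left) and φ.right is strongly cartesian with respect to p (over p.map φ.right), then φ is strongly cartesian with respect to p.mapArrow : Arrow C ⥤ Arrow D (over p.mapArrow.map φ). -/
open CategoryTheory

theorem aux_lift {C : Type*} {D : Type*} [Category C] [Category D]
    (p : C ⥤ D) {a b : C} (φ : a ⟶ b) (h : p.IsStronglyCartesian (p.map φ) φ)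
    {a' : C} (g : p.obj a' ⟶ p.obj a) (φ' : a' ⟶ b) (e : p.map φ' = g ≫ p.map φ) :
    ∃ χ : a' ⟶ a, p.map χ = g ∧ χ ≫ φ = φ' := by
  have : p.IsHomLift (g ≫ p.map φ) φ' := e ▸ inferInstance
  obtain ⟨χ, ⟨h1, h2⟩, -⟩ := h.universal_property' g φ'
  exact ⟨χ, (IsHomLift.eq_of_isHomLift p g χ).symm, h2⟩

theorem aux_ext {C : Type*} {D : Type*} [Category C] [Category D]
    (p : C ⥤ D) {a b : C} (φ : a ⟶ b) (h : p.IsStronglyCartesian (p.map φ) φ)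
    {a' : C} (χ χ' : a' ⟶ a) (e : p.map χ = p.map χ') (hcomp : χ ≫ φ = χ' ≫ φ) : χ = χ' := by
  have : p.IsHomLift (p.map χ) χ' := e ▸ inferInstance
  exact Functor.IsStronglyCartesian.ext p (p.map φ) φ (p.map χ) hcomp

/-- A morphism in the arrow category whose two components are strongly cartesian
(with respect to `p`) is strongly cartesian with respect to the induced functor
`p.mapArrow : Arrow C ⥤ Arrow D` on arrow categories. -/
theorem mapArrow_isStronglyCartesian {C : Type*} {D : Type*} [Category C] [Category D]
    (p : C ⥤ D) {A B : Arrow C} (φ : A ⟶ B)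
    (hleft : p.IsStronglyCartesian (p.map φ.left) φ.left)
    (hright : p.IsStronglyCartesian (p.map φ.right) φ.right) :
    p.mapArrow.IsStronglyCartesian (p.mapArrow.map φ) φ := by
  refine { toIsHomLift := inferInstance, universal_property' := ?_ }
  intro X g φ' hφ'
  have e := IsHomLift.eq_of_isHomLift p.mapArrow (g ≫ p.mapArrow.map φ) φ'
  obtain ⟨l, hl, hl'⟩ := aux_lift p φ.left hleft g.left φ'.left
    (congrArg (fun t => t.left) e).symm
  obtain ⟨r, hr, hr'⟩ := aux_lift p φ.right hright g.right φ'.right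
    (congrArg (fun t => t.right) e).symm
  have w : l ≫ A.hom = X.hom ≫ r := by
    apply aux_ext p φ.right hright
    · rw [p.map_comp, p.map_comp, hl, hr]
      exact Arrow.w g
    · rw [Category.assoc, Category.assoc, hr', ← Arrow.w φ, ← Category.assoc, hl']
      exact Arrow.w φ'
  have hg : p.mapArrow.map (Arrow.homMk l r w) = g := Arrow.hom_ext _ _ hl hr
  refine ⟨Arrow.homMk l r w, ⟨hg ▸ inferInstance, Arrow.hom_ext _ _ hl' hr'⟩, ?_⟩
  rintro χ ⟨h1, h2⟩
  have e2 := IsHomLift.eq_of_isHomLift p.mapArrow g χ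
  refine Arrow.hom_ext _ _ ?_ ?_
  · exact aux_ext p φ.left hleft _ _ ((congrArg (fun t => t.left) e2).symm.trans hl.symm)
      ((congrArg (fun t => t.left) h2).trans hl'.symm)
  · exact aux_ext p φ.right hright _ _ ((congrArg (fun t => t.right) e2).symm.trans hr.symm)
      ((congrArg (fun t => t.right) h2).trans hr'.symm)
end
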